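/- arXiv:1911.10505 — 2 statements merged into one kernel-verified Lean document; each statement's English description precedes it below -/
import Mathlib

section
/- The adversary's decision problem is not super-modular: there exist a flow network with p_e = 0 for every e, a feasible flow x̄ ∈ X, attack sets A ⊆ B ⊆ E \ {e_ts}, and an edge e* ∈ E \ (B ∪ {e_ts}) such that the marginal gain of adding e* to A is strictly larger than the marginal gain of adding e* to B, i.e. g(A ∪ {e*}) − g(A) > g(B ∪ {e*}) − g(B). -/
/-!
Deleting an `s`–`t` cut destroys the whole flow value, and nothing more can be destroyed afterwards.
Hence, when two edges in series carry a positive flow and each of them is a cut, attacking the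
second gains the full flow value if the first is intact and nothing once the first is attacked.
-/

attribute [local instance] Classical.propDecidable

/-- A flow network: a finite directed graph with node set `V`, edge set `E ⊆ V × V`,
source `s`, terminal `t` with `s ≠ t`, an artificial edge `(t, s) ∈ E`, nonnegative
capacities `U` and nonnegative unit routing costs `p` with `p (t, s) = 0`. -/
structure FlowNetwork where
  V : Type
  fintypeV : Fintype V
  E : Finset (V × V)
  s : V
  t : V
  s_ne_t : s ≠ t
  ts_mem : (t, s) ∈ E
  U : V × V → ℝ
  U_nonneg : ∀ e, 0 ≤ U e
  p : V × V → ℝ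
  p_nonneg : ∀ e, 0 ≤ p e
  p_ts : p (t, s) = 0

attribute [instance] FlowNetwork.fintypeV

namespace FlowNetwork

variable (N : FlowNetwork)

/-- Sum of a function over the edges entering node `v`. -/
noncomputable def inSum (y : N.V × N.V → ℝ) (v : N.V) : ℝ :=
  ∑ e ∈ N.E.filter (fun e => e.2 = v), y e

/-- Sum of a function over the edges leaving node `v`. -/
noncomputable def outSum (y : N.V × N.V → ℝ) (v : N.V) : ℝ :=
  ∑ e ∈ N.E.filter (fun e => e.1 = v), y e

/-- A feasible flow: nonnegative, conserved at every node other than `s`,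
and capacity-feasible on every edge other than the artificial edge `(t, s)`. -/
def Feasible (x : N.V × N.V → ℝ) : Prop :=
  (∀ e, 0 ≤ x e) ∧
  (∀ v, v ≠ N.s → N.inSum x v = N.outSum x v) ∧
  (∀ e ∈ N.E, e ≠ (N.t, N.s) → x e ≤ N.U e)

/-- `Λ_u`: the set of edges lying on some simple directed path from `u` to `t`. -/
def lambdaSet (u : N.V) : Set (N.V × N.V) :=
  {e | ∃ l : List N.V, l.Chain' (fun a b => (a, b) ∈ N.E) ∧ l.Nodup ∧
    l.head? = some u ∧ l.getLast? = some N.t ∧ e ∈ l.zip l.tail}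

/-- `ρ_e`: the set of edges `e' = (u, v) ∈ E` such that `e ∈ Λ_u`. -/
def rho (e : N.V × N.V) : Set (N.V × N.V) :=
  {e' | e' ∈ N.E ∧ e ∈ N.lambdaSet e'.1}

/-- The indicator `π_e` induced by an attack set `A`: `1` if some edge of `A` lies in
`ρ_e`, and `0` otherwise. -/
noncomputable def piOf (A : Finset (N.V × N.V)) (e : N.V × N.V) : ℝ :=
  if ∃ e' ∈ A, e' ∈ N.rho e then 1 else 0

/-- The set of objective values of feasible points of the LP defining `G(A)` for a
given feasible flow `xb` and attack set `A`. -/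
def GSet (xb : N.V × N.V → ℝ) (A : Finset (N.V × N.V)) : Set ℝ :=
  {r | ∃ y z : N.V × N.V → ℝ,
    (∀ e ∈ N.E, 0 ≤ y e) ∧ (∀ e ∈ N.E, 0 ≤ z e) ∧
    (∀ v, v ≠ N.s → N.outSum y v ≤ N.inSum y v) ∧
    (∀ e ∈ A, y e ≤ 0) ∧
    (∀ e ∈ N.E, e ∉ A → y e ≤ (1 - N.piOf A e) * xb e + N.piOf A e * N.U e) ∧
    (∀ e ∈ N.E, y e - xb e ≤ z e) ∧
    r = y (N.t, N.s) - ∑ e ∈ N.E, N.p e * z e}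

/-- `G(A)`: the optimal adaptive value after the attack set `A`. -/
noncomputable def GVal (xb : N.V × N.V → ℝ) (A : Finset (N.V × N.V)) : ℝ :=
  sSup (N.GSet xb A)

/-- `g(A) = G(∅) − G(A)`: the adversary's gain from the attack set `A`. -/
noncomputable def gain (xb : N.V × N.V → ℝ) (A : Finset (N.V × N.V)) : ℝ :=
  N.GVal xb ∅ - N.GVal xb A

section Cuts

/-- The attack set `A` contains an `s`–`t` cut. The cut is encoded by its sink side `T`:
every edge entering `T` belongs to `A`. -/
def ContainsCut (A : Finset (N.V × N.V)) : Prop :=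
  ∃ T : Finset N.V, N.t ∈ T ∧ N.s ∉ T ∧ ∀ e ∈ N.E, e.2 ∈ T → e.1 ∉ T → e ∈ A

variable {N} {xb y : N.V × N.V → ℝ} {A B : Finset (N.V × N.V)}

theorem ContainsCut.mono (hAB : A ⊆ B) : N.ContainsCut A → N.ContainsCut B :=
  fun ⟨T, ht, hs, hT⟩ => ⟨T, ht, hs, fun e he h₂ h₁ => hAB (hT e he h₂ h₁)⟩

theorem sum_inSum (y : N.V × N.V → ℝ) (T : Finset N.V) :
    ∑ v ∈ T, N.inSum y v = ∑ e ∈ N.E with e.2 ∈ T, y e := by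
  unfold inSum
  convert Finset.sum_fiberwise_eq_sum_filter N.E T Prod.snd y

theorem sum_outSum (y : N.V × N.V → ℝ) (T : Finset N.V) :
    ∑ v ∈ T, N.outSum y v = ∑ e ∈ N.E with e.1 ∈ T, y e := by
  unfold outSum
  convert Finset.sum_fiberwise_eq_sum_filter N.E T Prod.fst y

theorem sum_leaving_le_sum_entering {T : Finset N.V}
    (hy : ∀ v ∈ T, N.outSum y v ≤ N.inSum y v) :
    ∑ e ∈ N.E with e.1 ∈ T ∧ e.2 ∉ T, y e ≤ ∑ e ∈ N.E with e.2 ∈ T ∧ e.1 ∉ T, y e := by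
  have tails_le_heads : ∑ e ∈ N.E with e.1 ∈ T, y e ≤ ∑ e ∈ N.E with e.2 ∈ T, y e := by
    simpa only [sum_outSum, sum_inSum] using Finset.sum_le_sum hy
  have split_tails := Finset.sum_filter_add_sum_filter_not (N.E.filter (·.1 ∈ T)) (·.2 ∈ T) y
  have split_heads := Finset.sum_filter_add_sum_filter_not (N.E.filter (·.2 ∈ T)) (·.1 ∈ T) y
  rw [Finset.filter_comm] at split_heads
  simp only [Finset.filter_filter] at split_tails split_heads
  linarith

theorem ContainsCut.apply_ts_nonpos (hA : N.ContainsCut A) (hy : ∀ e ∈ N.E, 0 ≤ y e)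
    (hyc : ∀ v, v ≠ N.s → N.outSum y v ≤ N.inSum y v) (hyA : ∀ e ∈ A, y e ≤ 0) :
    y (N.t, N.s) ≤ 0 := by
  obtain ⟨T, ht, hs, hT⟩ := hA
  calc y (N.t, N.s)
      ≤ ∑ e ∈ N.E with e.1 ∈ T ∧ e.2 ∉ T, y e :=
        Finset.single_le_sum (fun e he => hy e (Finset.mem_of_mem_filter e he))
          (Finset.mem_filter.2 ⟨N.ts_mem, ht, hs⟩)
    _ ≤ ∑ e ∈ N.E with e.2 ∈ T ∧ e.1 ∉ T, y e :=
        sum_leaving_le_sum_entering fun v hv => hyc v (ne_of_mem_of_not_mem hv hs)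
    _ ≤ 0 := Finset.sum_nonpos fun e he => by
        obtain ⟨heE, h₂, h₁⟩ := Finset.mem_filter.1 he
        exact hyA e (hT e heE h₂ h₁)

theorem routingCost_nonneg {z : N.V × N.V → ℝ} (hz : ∀ e ∈ N.E, 0 ≤ z e) :
    0 ≤ ∑ e ∈ N.E, N.p e * z e :=
  Finset.sum_nonneg fun e he => mul_nonneg (N.p_nonneg e) (hz e he)

theorem piOf_empty (e : N.V × N.V) : N.piOf ∅ e = 0 := by
  simp [piOf]

theorem piOf_eq_zero_or_one (A : Finset (N.V × N.V)) (e : N.V × N.V) :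
    N.piOf A e = 0 ∨ N.piOf A e = 1 := by
  unfold piOf
  split_ifs <;> simp

theorem Feasible.GVal_empty (hx : N.Feasible xb) : N.GVal xb ∅ = xb (N.t, N.s) := by
  obtain ⟨hnonneg, hcons, -⟩ := hx
  refine IsGreatest.csSup_eq ⟨⟨xb, 0, fun e _ => hnonneg e, by simp,
    fun v hv => (hcons v hv).ge, by simp, by simp [piOf_empty], by simp, by simp⟩, ?_⟩
  rintro _ ⟨y, z, -, hz, -, -, hcap, -, rfl⟩
  have value_le : y (N.t, N.s) ≤ xb (N.t, N.s) := by
    simpa [piOf_empty] using hcap _ N.ts_mem (Finset.notMem_empty _)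
  linarith [routingCost_nonneg hz]

theorem ContainsCut.GVal_eq_zero (hA : N.ContainsCut A) (hx : ∀ e ∈ N.E, 0 ≤ xb e) :
    N.GVal xb A = 0 := by
  have capacity_nonneg : ∀ e ∈ N.E,
      0 ≤ (1 - N.piOf A e) * xb e + N.piOf A e * N.U e := fun e he => by
    rcases piOf_eq_zero_or_one A e with h | h <;> simp [h, hx e he, N.U_nonneg]
  refine IsGreatest.csSup_eq ⟨⟨0, 0, by simp, by simp, by simp [inSum, outSum], by simp,
    fun e he _ => capacity_nonneg e he, by simpa using hx, by simp⟩, ?_⟩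
  rintro _ ⟨y, z, hy, hz, hyc, hyA, -, -, rfl⟩
  linarith [hA.apply_ts_nonpos hy hyc hyA, routingCost_nonneg hz]

theorem ContainsCut.gain_eq (hA : N.ContainsCut A) (hx : N.Feasible xb) :
    N.gain xb A = xb (N.t, N.s) := by
  rw [gain, hx.GVal_empty, hA.GVal_eq_zero fun e _ => hx.1 e, sub_zero]

theorem marginal_gain_lt_of_containsCut {f : N.V × N.V} (hx : N.Feasible xb)
    (hpos : 0 < xb (N.t, N.s)) (hB : N.ContainsCut B) (hf : N.ContainsCut {f}) :
    N.gain xb (insert f B) - N.gain xb B < N.gain xb (insert f ∅) - N.gain xb ∅ := by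
  have gain_empty : N.gain xb ∅ = 0 := sub_self _
  have gain_singleton : N.gain xb (insert f ∅) = xb (N.t, N.s) := by
    rw [insert_empty_eq, hf.gain_eq hx]
  rw [(hB.mono (Finset.subset_insert f B)).gain_eq hx, hB.gain_eq hx, gain_empty, gain_singleton]
  linarith

end Cuts

/-- The path `0 → 1 → 2` from the source `0` to the terminal `2`, closed by the artificial edge,
with unit capacities and no routing costs. Its edges `(0, 1)` and `(1, 2)` are cuts in series. -/
noncomputable abbrev seriesNetwork : FlowNetwork where
  V := Fin 3
  fintypeV := inferInstance
  E := {(0, 1), (1, 2), (2, 0)}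
  s := 0
  t := 2
  s_ne_t := by decide
  ts_mem := by simp
  U := 1
  U_nonneg := fun _ => zero_le_one
  p := 0
  p_nonneg := fun _ => le_rfl
  p_ts := rfl

theorem seriesNetwork_feasible_one : seriesNetwork.Feasible 1 := by
  refine ⟨fun _ => zero_le_one, fun v _ => ?_, fun _ _ _ => le_rfl⟩
  change Fin 3 at v
  fin_cases v <;> simp [inSum, outSum, Finset.filter_insert, Finset.filter_singleton]

theorem seriesNetwork_containsCut_zero_one :
    seriesNetwork.ContainsCut {((0 : Fin 3), (1 : Fin 3))} :=
  ⟨({1, 2} : Finset (Fin 3)), by simp, by simp, by simp⟩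

theorem seriesNetwork_containsCut_one_two :
    seriesNetwork.ContainsCut {((1 : Fin 3), (2 : Fin 3))} :=
  ⟨({2} : Finset (Fin 3)), by simp, by simp, by simp⟩

/-- The adversary's decision problem is not super-modular. -/
theorem adversary_not_supermodular :
    ∃ (N : FlowNetwork) (xb : N.V × N.V → ℝ) (A B : Finset (N.V × N.V))
      (estar : N.V × N.V),
      (∀ e, N.p e = 0) ∧ N.Feasible xb ∧
      A ⊆ B ∧ B ⊆ N.E ∧ (N.t, N.s) ∉ B ∧
      estar ∈ N.E ∧ estar ∉ B ∧ estar ≠ (N.t, N.s) ∧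
      N.gain xb (insert estar A) - N.gain xb A >
        N.gain xb (insert estar B) - N.gain xb B := by
  refine ⟨seriesNetwork, 1, ∅, {((0 : Fin 3), (1 : Fin 3))}, ((1 : Fin 3), (2 : Fin 3)),
    fun _ => rfl, seriesNetwork_feasible_one, Finset.empty_subset _, by simp, by simp, by simp,
    by simp, by simp, ?_⟩
  exact marginal_gain_lt_of_containsCut seriesNetwork_feasible_one one_pos
    seriesNetwork_containsCut_zero_one seriesNetwork_containsCut_one_two

end FlowNetwork
end

section
/- For every flow network, every feasible flow x ∈ X, every budget Γ ∈ ℕ, and every attack μ with μ_{e_ts} = 0 and Σ_{e∈E} μ_e ≤ Γ, one has M(x, μ) ≥ M(x, 0) − Σ_{e : μ_e = 1} x_e ≥ M(x, 0) − Γ · max_{e ∈ E \ {e_ts}} U_e, where 0 denotes the attack with no attacked edges. Consequently, the maximum loss in the administrator's objective value due to adversarial attacks with budget Γ is bounded by Γ times the maximum edge capacity. -/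
attribute [local instance] Classical.propDecidable

namespace FlowNetwork

variable (N : FlowNetwork)

/-- `σ_μ`: the set of tails of the edges attacked by `μ`. -/
def sigmaSet (μ : N.V × N.V → ℝ) : Set N.V :=
  {u | ∃ w, (u, w) ∈ N.E ∧ μ (u, w) = 1}

/-- `Λ_{σ_μ}`: the union of `Λ_u` over all tails `u` of attacked edges. -/
def lambdaSigma (μ : N.V × N.V → ℝ) : Set (N.V × N.V) :=
  ⋃ u ∈ N.sigmaSet μ, N.lambdaSet u

/-- The set of objective values of feasible points of the LP defining `M(x, μ)`. -/
def MSet (x μ : N.V × N.V → ℝ) : Set ℝ :=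
  {r | ∃ y z : N.V × N.V → ℝ,
    (∀ e ∈ N.E, 0 ≤ y e) ∧ (∀ e ∈ N.E, 0 ≤ z e) ∧
    (∀ v, v ≠ N.s → N.outSum y v ≤ N.inSum y v) ∧
    (∀ e ∈ N.E, e ∉ N.lambdaSigma μ → y e ≤ x e) ∧
    (∀ e ∈ N.E, e ∈ N.lambdaSigma μ → y e ≤ (1 - μ e) * N.U e) ∧
    (∀ e ∈ N.E, e ∈ N.lambdaSigma μ → y e - x e ≤ z e) ∧
    r = y (N.t, N.s) - ∑ e ∈ N.E, N.p e * z e - ∑ e ∈ N.E, N.p e * x e}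

/-- `M(x, μ)`: the adaptive value of the flow `x` under the attack `μ`. -/
noncomputable def MVal (x μ : N.V × N.V → ℝ) : ℝ := sSup (N.MSet x μ)

/-!
Rerouting never helps the unattacked network, so `M(x, 0)` is the value of `x` itself. Under an
attack, remove from `x` a part `d` that contains all the flow on the attacked edges and leaves
every node other than `s` with at least as much inflow as outflow; the remainder `x - d` is
admissible for `M(x, μ)` and no edge needs extra capacity. Take `d` minimal. At a node where `d`
has more outflow than inflow (or at `s`), minimality leaves nothing to remove outside the attacked
edges, so the outflow of `d` there is carried by attacked edges alone. Summing over all nodes, the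
inflow of `d` at `s`, and with it `d (t, s)`, is at most the flow on the attacked edges.
-/

theorem exists_minimal_of_isCompact {ι : Type*} [Finite ι] {K : Set (ι → ℝ)}
    (hK : IsCompact K) (hne : K.Nonempty) : ∃ d, Minimal (· ∈ K) d := by
  have := Fintype.ofFinite ι
  obtain ⟨d, hd, hmin⟩ := hK.exists_isMinOn hne (f := fun d => ∑ i, d i) (by fun_prop)
  refine ⟨d, hd, fun d' hd' hle => ?_⟩
  by_contra hnot
  exact (Fintype.sum_strictMono (lt_of_le_not_ge hle hnot)).not_ge (hmin hd')

theorem fst_ne_getLast_of_mem_zip_tail {α : Type*} {a b t : α} {l : List α} (hl : l.Nodup)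
    (ht : l.getLast? = some t) (hab : (a, b) ∈ l.zip l.tail) : a ≠ t := by
  induction l with
  | nil => simp at hab
  | cons c l ih =>
    cases l with
    | nil => simp at hab
    | cons c' l =>
      rw [List.getLast?_cons_cons] at ht
      rw [List.tail_cons, List.zip_cons_cons, List.mem_cons] at hab
      rcases hab with hhead | htail
      · obtain rfl : a = c := congrArg Prod.fst hhead
        rintro rfl
        exact hl.notMem (List.mem_of_getLast? ht)
      · exact ih hl.of_cons ht htail

section Conservation

variable {N} {x y : N.V × N.V → ℝ} {e : N.V × N.V} {v : N.V} {c : ℝ}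

theorem inSum_sub : N.inSum (x - y) v = N.inSum x v - N.inSum y v :=
  Finset.sum_sub_distrib _ _

theorem outSum_sub : N.outSum (x - y) v = N.outSum x v - N.outSum y v :=
  Finset.sum_sub_distrib _ _

theorem inSum_mono (hxy : x ≤ y) : N.inSum x v ≤ N.inSum y v :=
  Finset.sum_le_sum fun e _ => hxy e

theorem outSum_single : N.outSum (Pi.single e c) v = if e ∈ N.E ∧ e.1 = v then c else 0 := by
  simp [outSum, Finset.sum_pi_single']

theorem sum_inSum_eq_sum_outSum : ∑ v, N.inSum x v = ∑ v, N.outSum x v :=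
  (Finset.sum_fiberwise N.E Prod.snd x).trans (Finset.sum_fiberwise N.E Prod.fst x).symm

theorem inSum_source :
    N.inSum x N.s = N.outSum x N.s + ∑ v ∈ Finset.univ.erase N.s, (N.outSum x v - N.inSum x v) := by
  have hin := Finset.add_sum_erase Finset.univ (N.inSum x) (Finset.mem_univ N.s)
  have hout := Finset.add_sum_erase Finset.univ (N.outSum x) (Finset.mem_univ N.s)
  rw [Finset.sum_sub_distrib]
  linarith [N.sum_inSum_eq_sum_outSum (x := x)]

theorem apply_ts_le_inSum (hx : 0 ≤ x) : x (N.t, N.s) ≤ N.inSum x N.s :=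
  Finset.single_le_sum (fun e _ => hx e) (by simp [N.ts_mem])

end Conservation

section Deletion

variable {N} {x d : N.V × N.V → ℝ} {e : N.V × N.V} {v : N.V} {c : ℝ} {A : Finset (N.V × N.V)}

variable (N) in
/-- `d` is a part of the flow `x` that contains all the flow on the edges in `A`, and whose
removal from a flow conserved away from `s` leaves at every node other than `s` at least as much
inflow as outflow, as the LP defining `M` requires. -/
structure IsDeletion (x : N.V × N.V → ℝ) (A : Finset (N.V × N.V)) (d : N.V × N.V → ℝ) :
    Prop where
  nonneg : 0 ≤ d
  le : d ≤ x
  eq_of_mem : ∀ e ∈ A, d e = x e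
  inSum_le_outSum : ∀ v, v ≠ N.s → N.inSum d v ≤ N.outSum d v

theorem isCompact_setOf_isDeletion : IsCompact {d | N.IsDeletion x A d} := by
  have hdel : {d | N.IsDeletion x A d} = Set.Icc 0 x ∩
      ({d | ∀ e ∈ A, d e = x e} ∩ {d | ∀ v, v ≠ N.s → N.inSum d v ≤ N.outSum d v}) := by
    ext d
    exact ⟨fun h => ⟨⟨h.1, h.2⟩, h.3, h.4⟩, fun h => ⟨h.1.1, h.1.2, h.2.1, h.2.2⟩⟩
  rw [hdel]
  refine isCompact_Icc.inter_right (IsClosed.inter ?_ ?_) <;> simp only [Set.ofPred_forall]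
  · exact isClosed_iInter fun e => isClosed_iInter fun _ =>
      isClosed_eq (continuous_apply e) continuous_const
  · refine isClosed_iInter fun v => isClosed_iInter fun _ => isClosed_le ?_ ?_
    · unfold inSum; fun_prop
    · unfold outSum; fun_prop

theorem IsDeletion.sub_single (hd : N.IsDeletion x A d) (he : e ∉ A) (hc : 0 ≤ c) (hce : c ≤ d e)
    (hv : e.1 ≠ N.s → N.inSum d e.1 + c ≤ N.outSum d e.1) :
    N.IsDeletion x A (d - Pi.single e c) := by
  have hle : d - Pi.single e c ≤ d := sub_le_self d (Pi.single_nonneg.2 hc)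
  refine ⟨fun e' => ?_, hle.trans hd.le, fun e' he' => ?_, fun v hvs => ?_⟩
  · rcases eq_or_ne e' e with rfl | hne
    · simpa using hce
    · simpa [hne] using hd.nonneg e'
  · have hne : e' ≠ e := ne_of_mem_of_not_mem he' he
    simpa [hne] using hd.eq_of_mem e' he'
  · refine (inSum_mono hle).trans ?_
    rw [outSum_sub, outSum_single]
    split_ifs with hev
    · obtain ⟨-, rfl⟩ := hev
      linarith [hv hvs]
    · simpa using hd.inSum_le_outSum v hvs

theorem eq_zero_of_minimal_isDeletion (hd : Minimal (N.IsDeletion x A) d) (he : e ∉ A)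
    (hv : e.1 ≠ N.s → N.inSum d e.1 < N.outSum d e.1) : d e = 0 := by
  by_contra hne
  have hpos : 0 < d e := (hd.prop.nonneg e).lt_of_ne' hne
  obtain ⟨c, hc, hce, hcv⟩ :
      ∃ c, 0 < c ∧ c ≤ d e ∧ (e.1 ≠ N.s → N.inSum d e.1 + c ≤ N.outSum d e.1) := by
    by_cases hs : e.1 = N.s
    · exact ⟨d e, hpos, le_rfl, fun h => absurd hs h⟩
    · exact ⟨min (d e) (N.outSum d e.1 - N.inSum d e.1), lt_min hpos (sub_pos.2 (hv hs)),
        min_le_left _ _, fun _ => le_sub_iff_add_le'.1 (min_le_right _ _)⟩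
  have hle := hd.le_of_le (hd.prop.sub_single he hc.le hce hcv)
    (sub_le_self d (Pi.single_nonneg.2 hc.le)) e
  simp only [Pi.sub_apply, Pi.single_eq_same] at hle
  linarith

theorem outSum_le_of_minimal_isDeletion (hd : Minimal (N.IsDeletion x A) d)
    (hv : v ≠ N.s → N.inSum d v < N.outSum d v) :
    N.outSum d v ≤ ∑ e ∈ A with e.1 = v, d e := by
  have hsupp : ∀ e ∈ N.E.filter (fun e => e.1 = v), d e ≠ 0 → e ∈ A := by
    intro e he hde
    obtain ⟨-, rfl⟩ := Finset.mem_filter.1 he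
    exact not_imp_comm.1 (fun heA => eq_zero_of_minimal_isDeletion hd heA hv) hde
  rw [outSum, ← Finset.sum_filter_of_ne hsupp]
  refine Finset.sum_le_sum_of_subset_of_nonneg (fun e he => ?_) fun e _ _ => hd.prop.nonneg e
  simp only [Finset.mem_filter] at he ⊢
  exact ⟨he.2, he.1.2⟩

theorem outSum_sub_inSum_le_of_minimal_isDeletion (hd : Minimal (N.IsDeletion x A) d) :
    N.outSum d v - N.inSum d v ≤ ∑ e ∈ A with e.1 = v, d e := by
  rcases lt_or_ge (N.inSum d v) (N.outSum d v) with hlt | hge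
  · have hin : 0 ≤ N.inSum d v := Finset.sum_nonneg fun e _ => hd.prop.nonneg e
    linarith [outSum_le_of_minimal_isDeletion hd fun _ => hlt]
  · exact (sub_nonpos.2 hge).trans (Finset.sum_nonneg fun e _ => hd.prop.nonneg e)

theorem inSum_source_le_of_minimal_isDeletion (hd : Minimal (N.IsDeletion x A) d) :
    N.inSum d N.s ≤ ∑ e ∈ A, x e :=
  calc N.inSum d N.s
      = N.outSum d N.s + ∑ v ∈ Finset.univ.erase N.s, (N.outSum d v - N.inSum d v) := inSum_source
    _ ≤ (∑ e ∈ A with e.1 = N.s, d e) +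
          ∑ v ∈ Finset.univ.erase N.s, ∑ e ∈ A with e.1 = v, d e :=
        add_le_add (outSum_le_of_minimal_isDeletion hd fun h => absurd rfl h)
          (Finset.sum_le_sum fun _ _ => outSum_sub_inSum_le_of_minimal_isDeletion hd)
    _ = ∑ v, ∑ e ∈ A with e.1 = v, d e :=
        Finset.add_sum_erase _ (fun v => ∑ e ∈ A with e.1 = v, d e) (Finset.mem_univ N.s)
    _ = ∑ e ∈ A, d e := Finset.sum_fiberwise A Prod.fst d
    _ = ∑ e ∈ A, x e := Finset.sum_congr rfl hd.prop.eq_of_mem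

theorem exists_isDeletion_apply_ts_le (hx : 0 ≤ x)
    (hcons : ∀ v, v ≠ N.s → N.inSum x v ≤ N.outSum x v) (A : Finset (N.V × N.V)) :
    ∃ d, N.IsDeletion x A d ∧ d (N.t, N.s) ≤ ∑ e ∈ A, x e := by
  obtain ⟨d, hd⟩ := exists_minimal_of_isCompact (isCompact_setOf_isDeletion (N := N) (A := A))
    ⟨x, hx, le_rfl, fun _ _ => rfl, hcons⟩
  exact ⟨d, hd.prop,
    (apply_ts_le_inSum hd.prop.nonneg).trans (inSum_source_le_of_minimal_isDeletion hd)⟩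

end Deletion

section AdaptiveValue

variable {N} {x d μ : N.V × N.V → ℝ}

variable (N) in
/-- The edges removed by the attack `μ`, whose total flow bounds the loss. -/
noncomputable def attackedEdges (μ : N.V × N.V → ℝ) : Finset (N.V × N.V) :=
  N.E.filter (fun e => μ e = 1)

theorem ts_notMem_lambdaSigma : (N.t, N.s) ∉ N.lambdaSigma μ := by
  simp only [lambdaSigma, Set.mem_iUnion, not_exists]
  rintro u - ⟨l, -, hnodup, -, hlast, hmem⟩
  exact fst_ne_getLast_of_mem_zip_tail hnodup hlast hmem rfl

theorem mem_upperBounds_MSet :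
    x (N.t, N.s) - ∑ e ∈ N.E, N.p e * x e ∈ upperBounds (N.MSet x μ) := by
  rintro r ⟨y, z, -, hz, -, hyx, -, -, rfl⟩
  have hts : y (N.t, N.s) ≤ x (N.t, N.s) := hyx _ N.ts_mem ts_notMem_lambdaSigma
  have hcost : 0 ≤ ∑ e ∈ N.E, N.p e * z e :=
    Finset.sum_nonneg fun e he => mul_nonneg (N.p_nonneg e) (hz e he)
  linarith

theorem IsDeletion.sub_mem_MSet (hx : N.Feasible x) (hμ : ∀ e ∈ N.E, μ e = 0 ∨ μ e = 1)
    (hd : N.IsDeletion x (N.attackedEdges μ) d) :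
    x (N.t, N.s) - d (N.t, N.s) - ∑ e ∈ N.E, N.p e * x e ∈ N.MSet x μ := by
  obtain ⟨-, hcons, hcap⟩ := hx
  have hle : x - d ≤ x := sub_le_self x hd.nonneg
  refine ⟨x - d, 0, fun e _ => sub_nonneg.2 (hd.le e), fun _ _ => le_rfl, fun v hv => ?_,
    fun e _ _ => hle e, fun e he heΛ => ?_, fun e _ _ => sub_nonpos.2 (hle e), by simp⟩
  · rw [inSum_sub, outSum_sub, hcons v hv]
    exact sub_le_sub_left (hd.inSum_le_outSum v hv) _
  · rcases hμ e he with hμe | hμe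
    · have hne : e ≠ (N.t, N.s) := fun h => ts_notMem_lambdaSigma (h ▸ heΛ)
      rw [hμe, sub_zero, one_mul]
      exact (hle e).trans (hcap e he hne)
    · simp [hμe, hd.eq_of_mem e (Finset.mem_filter.2 ⟨he, hμe⟩)]

theorem MVal_zero (hx : N.Feasible x) :
    N.MVal x (fun _ => 0) = x (N.t, N.s) - ∑ e ∈ N.E, N.p e * x e := by
  have hd : N.IsDeletion x (N.attackedEdges fun _ => 0) 0 :=
    ⟨le_rfl, hx.1, by simp [attackedEdges], by simp [inSum, outSum]⟩
  have hmem := hd.sub_mem_MSet hx fun _ _ => .inl rfl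
  rw [Pi.zero_apply, sub_zero] at hmem
  exact IsGreatest.csSup_eq ⟨hmem, mem_upperBounds_MSet⟩

theorem MVal_zero_sub_sum_attackedEdges_le (hx : N.Feasible x)
    (hμ : ∀ e ∈ N.E, μ e = 0 ∨ μ e = 1) :
    N.MVal x (fun _ => 0) - ∑ e ∈ N.attackedEdges μ, x e ≤ N.MVal x μ := by
  obtain ⟨d, hd, hts⟩ := exists_isDeletion_apply_ts_le hx.1 (fun v hv => (hx.2.1 v hv).le)
    (N.attackedEdges μ)
  calc N.MVal x (fun _ => 0) - ∑ e ∈ N.attackedEdges μ, x e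
      ≤ x (N.t, N.s) - d (N.t, N.s) - ∑ e ∈ N.E, N.p e * x e := by
        rw [MVal_zero hx]
        linarith
    _ ≤ N.MVal x μ := le_csSup ⟨_, mem_upperBounds_MSet⟩ (hd.sub_mem_MSet hx hμ)

end AdaptiveValue

section Budget

variable {N} {x μ : N.V × N.V → ℝ} {e : N.V × N.V}

variable (N) in
/-- The largest capacity of a non-artificial edge, the loss per unit of budget; it is `0` if there
is no such edge, since `sSup ∅ = 0`. -/
noncomputable def maxCapacity : ℝ :=
  sSup (N.U '' {e : N.V × N.V | e ∈ N.E ∧ e ≠ (N.t, N.s)})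

theorem maxCapacity_nonneg : 0 ≤ N.maxCapacity :=
  Real.sSup_nonneg (Set.forall_mem_image.2 fun e _ => N.U_nonneg e)

theorem U_le_maxCapacity (he : e ∈ N.E) (hne : e ≠ (N.t, N.s)) : N.U e ≤ N.maxCapacity :=
  le_csSup ((Set.toFinite _).image _).bddAbove (Set.mem_image_of_mem N.U ⟨he, hne⟩)

theorem card_attackedEdges (hμ : ∀ e ∈ N.E, μ e = 0 ∨ μ e = 1) :
    ((N.attackedEdges μ).card : ℝ) = ∑ e ∈ N.E, μ e := by
  rw [attackedEdges, Finset.card_filter, Nat.cast_sum]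
  refine Finset.sum_congr rfl fun e he => ?_
  rcases hμ e he with hμe | hμe <;> simp [hμe]

theorem sum_attackedEdges_le (hx : N.Feasible x) (hμts : μ (N.t, N.s) ≠ 1) :
    ∑ e ∈ N.attackedEdges μ, x e ≤ (N.attackedEdges μ).card * N.maxCapacity := by
  rw [← nsmul_eq_mul]
  refine Finset.sum_le_card_nsmul _ _ _ fun e he => ?_
  obtain ⟨heE, hμe⟩ := Finset.mem_filter.1 he
  have hne : e ≠ (N.t, N.s) := fun h => hμts (h ▸ hμe)
  exact (hx.2.2 e heE hne).trans (U_le_maxCapacity heE hne)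

end Budget

/-- The loss from a budget-`Γ` attack is bounded by the total flow on the attacked
edges, which is in turn bounded by `Γ` times the maximum edge capacity. -/
theorem attack_loss_budget_bound (N : FlowNetwork) (x : N.V × N.V → ℝ)
    (hx : N.Feasible x) (Γ : ℕ) (μ : N.V × N.V → ℝ)
    (hμ01 : ∀ e, μ e = 0 ∨ μ e = 1) (hsupp : ∀ e, e ∉ N.E → μ e = 0)
    (hμts : μ (N.t, N.s) = 0) (hbud : ∑ e ∈ N.E, μ e ≤ (Γ : ℝ)) :
    N.MVal x (fun _ => 0) - ∑ e ∈ N.E.filter (fun e => μ e = 1), x e ≤ N.MVal x μ ∧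
    N.MVal x (fun _ => 0) -
        (Γ : ℝ) * sSup (N.U '' {e : N.V × N.V | e ∈ N.E ∧ e ≠ (N.t, N.s)}) ≤
      N.MVal x (fun _ => 0) - ∑ e ∈ N.E.filter (fun e => μ e = 1), x e := by
  have hμ : ∀ e ∈ N.E, μ e = 0 ∨ μ e = 1 := fun e _ => hμ01 e
  have hcard : ((N.attackedEdges μ).card : ℝ) ≤ Γ := (card_attackedEdges hμ).trans_le hbud
  have hflow : ∑ e ∈ N.attackedEdges μ, x e ≤ Γ * N.maxCapacity :=
    (sum_attackedEdges_le hx (by simp [hμts])).trans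
      (mul_le_mul_of_nonneg_right hcard maxCapacity_nonneg)
  exact ⟨MVal_zero_sub_sum_attackedEdges_le hx hμ, sub_le_sub_left hflow _⟩

end FlowNetwork
end
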